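/- arXiv:1205.3454 — 2 statements merged into one kernel-verified Lean document; each statement's English description precedes it below -/
import Mathlib

section
/- Let S be an idempotent covered semigroup and let (s,t,α), (u,v,β) ∈ T(S). Then (s,t,α) 𝓓 (u,v,β) in T(S) if and only if t 𝓓 v in S. -/
namespace SemibandEmbed

/-- The two-element right-zero semigroup `R₂ = {σ, τ}`. -/
inductive R2 : Type where
  | σ : R2
  | τ : R2
  deriving DecidableEq

section GreenDefs

variable {S : Type*} [Semigroup S]

/-- Green's relation 𝓡 : `a 𝓡 b` iff `a S¹ = b S¹` (inside `S¹ = WithOne S`). -/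
def greenR (a b : S) : Prop :=
  {x : WithOne S | ∃ u : WithOne S, x = (a : WithOne S) * u} =
    {x : WithOne S | ∃ u : WithOne S, x = (b : WithOne S) * u}

/-- Green's relation 𝓛 : `a 𝓛 b` iff `S¹ a = S¹ b`. -/
def greenL (a b : S) : Prop :=
  {x : WithOne S | ∃ u : WithOne S, x = u * (a : WithOne S)} =
    {x : WithOne S | ∃ u : WithOne S, x = u * (b : WithOne S)}

/-- Green's relation 𝓗 = 𝓛 ∩ 𝓡. -/
def greenH (a b : S) : Prop := greenL a b ∧ greenR a b

/-- Green's relation 𝓓 : `a 𝓓 b` iff `a 𝓡 c` and `c 𝓛 b` for some `c`. -/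
def greenD (a b : S) : Prop := ∃ c : S, greenR a c ∧ greenL c b

/-- Green's relation 𝓙 : `a 𝓙 b` iff `S¹ a S¹ = S¹ b S¹`. -/
def greenJ (a b : S) : Prop :=
  {x : WithOne S | ∃ u v : WithOne S, x = u * (a : WithOne S) * v} =
    {x : WithOne S | ∃ u v : WithOne S, x = u * (b : WithOne S) * v}

/-- Mitsch's natural partial order on a semigroup. -/
def natLe (a b : S) : Prop := ∃ x y : S, a = x * b ∧ a = b * y ∧ a = a * y

end GreenDefs

/-- A semigroup is idempotent covered if every element `s` satisfies `s e = s = f s`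
for some idempotents `e`, `f`. -/
def IdemCovered (S : Type*) [Semigroup S] : Prop :=
  ∀ s : S, ∃ e f : S, IsIdempotentElem e ∧ IsIdempotentElem f ∧ s * e = s ∧ f * s = s

/-- A semigroup is regular if every `a` satisfies `a x a = a` for some `x`. -/
def IsRegularSemigroup (S : Type*) [Semigroup S] : Prop :=
  ∀ a : S, ∃ x : S, a * x * a = a

/-- A semigroup is periodic if every element generates a finite monogenic subsemigroup,
i.e. `aᵐ = aⁿ` for some `0 < m < n` (powers computed in `S¹ = WithOne S`). -/
def IsPeriodic (S : Type*) [Semigroup S] : Prop :=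
  ∀ a : S, ∃ m n : ℕ, 0 < m ∧ m < n ∧ (a : WithOne S) ^ m = (a : WithOne S) ^ n

/-- `𝓗` is a left congruence. -/
def IsLeftCongH (S : Type*) [Semigroup S] : Prop :=
  ∀ a b c : S, greenH a b → greenH (c * a) (c * b)

/-- `𝓗` is a right congruence. -/
def IsRightCongH (S : Type*) [Semigroup S] : Prop :=
  ∀ a b c : S, greenH a b → greenH (a * c) (b * c)

/-- A semigroup is completely regular if every element is 𝓗-related to an idempotent. -/
def IsCompletelyRegular (S : Type*) [Semigroup S] : Prop :=
  ∀ a : S, ∃ e : S, IsIdempotentElem e ∧ greenH a e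

section SemidirectProduct

variable {S : Type*} [Semigroup S]

/-- The multiplication of the semidirect product `(S × S) * R₂`:
`(t₁,s₁,σ)·(t₂,s₂,α) = (t₁s₂, s₁s₂, α)` and `(t₁,s₁,τ)·(t₂,s₂,α) = (t₁t₂, s₁t₂, α)`. -/
def sdMul (x y : S × S × R2) : S × S × R2 :=
  match x, y with
  | (t₁, s₁, R2.σ), (_, s₂, α) => (t₁ * s₂, s₁ * s₂, α)
  | (t₁, s₁, R2.τ), (t₂, _, α) => (t₁ * t₂, s₁ * t₂, α)

instance : Mul (S × S × R2) := ⟨sdMul⟩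

theorem sdMul_def (x y : S × S × R2) : x * y = sdMul x y := rfl

instance : Semigroup (S × S × R2) where
  mul_assoc x y z := by
    obtain ⟨t₁, s₁, α₁⟩ := x
    obtain ⟨t₂, s₂, α₂⟩ := y
    obtain ⟨t₃, s₃, α₃⟩ := z
    cases α₁ <;> cases α₂ <;> simp [sdMul_def, sdMul, mul_assoc]

/-- The set `E = {(s,t,α) ∈ E(T*R₂) : s ∈ S¹ t}`. -/
def Eset (S : Type*) [Semigroup S] : Set (S × S × R2) :=
  {x | IsIdempotentElem x ∧ ∃ a : WithOne S, (x.1 : WithOne S) = a * (x.2.1 : WithOne S)}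

/-- `T(S)`: the subsemigroup of the semidirect product generated by `E`. -/
def TS (S : Type*) [Semigroup S] : Subsemigroup (S × S × R2) :=
  Subsemigroup.closure (Eset S)

/-- Green's `𝓛` is a right congruence. -/
theorem greenL_mul_right {S : Type*} [Semigroup S] {a b : S} (hab : greenL a b) (c : S) :
    greenL (a * c) (b * c) := by
  have key : ∀ {a b : S}, greenL a b → ∀ x : WithOne S,
      (∃ u : WithOne S, x = u * ((a * c : S) : WithOne S)) →
      (∃ u : WithOne S, x = u * ((b * c : S) : WithOne S)) := by
    intro a b hab x hx
    obtain ⟨u, rfl⟩ := hx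
    have h1 : (u * (a : WithOne S)) ∈
        {x : WithOne S | ∃ u : WithOne S, x = u * (a : WithOne S)} := ⟨u, rfl⟩
    rw [greenL] at hab
    rw [hab] at h1
    obtain ⟨w, hw⟩ := h1
    refine ⟨w, ?_⟩
    rw [WithOne.coe_mul, WithOne.coe_mul, ← mul_assoc, hw, mul_assoc]
  have hab' : greenL b a := hab.symm
  ext x
  exact ⟨key hab x, key hab' x⟩

/-- `R(S) = {(s,t,α) ∈ T(S) : s 𝓛 t}`, a subsemigroup of `T(S)`. -/
def RS (S : Type*) [Semigroup S] : Subsemigroup ↥(TS S) where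
  carrier := {x | greenL (x : S × S × R2).1 (x : S × S × R2).2.1}
  mul_mem' := by
    rintro ⟨⟨s, t, α⟩, hx⟩ ⟨⟨u, v, β⟩, hy⟩ hxs hys
    simp only [Set.mem_setOf_eq] at hxs hys ⊢
    cases α <;> exact greenL_mul_right hxs _

end SemidirectProduct


theorem greenL_iff' {S : Type*} [Semigroup S] (a b : S) :
    greenL a b ↔ (a = b ∨ ∃ u, a = u * b) ∧ (b = a ∨ ∃ u, b = u * a) := by
  have half : ∀ a b : S, ((a : WithOne S) ∈ {x : WithOne S | ∃ u : WithOne S, x = u * (b : WithOne S)})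
      ↔ (a = b ∨ ∃ u, a = u * b) := by
    intro a b
    constructor
    · rintro ⟨u, hu⟩
      induction u using WithOne.recOneCoe with
      | one => left; rw [one_mul] at hu; exact WithOne.coe_inj.1 hu
      | coe u => right; exact ⟨u, WithOne.coe_inj.1 (by rw [hu, WithOne.coe_mul])⟩
    · rintro (rfl | ⟨u, rfl⟩)
      · exact ⟨1, (one_mul _).symm⟩
      · exact ⟨u, WithOne.coe_mul _ _⟩
  rw [← half, ← half]
  constructor
  · intro h
    constructor
    · rw [← show _ = _ from h]; exact ⟨1, (one_mul _).symm⟩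
    · rw [show _ = _ from h]; exact ⟨1, (one_mul _).symm⟩
  · rintro ⟨⟨p, hp⟩, ⟨q, hq⟩⟩
    ext x
    constructor
    · rintro ⟨u, rfl⟩
      exact ⟨u * p, by rw [mul_assoc, ← hp]⟩
    · rintro ⟨u, rfl⟩
      exact ⟨u * q, by rw [mul_assoc, ← hq]⟩

theorem greenR_iff' {S : Type*} [Semigroup S] (a b : S) :
    greenR a b ↔ (a = b ∨ ∃ u, a = b * u) ∧ (b = a ∨ ∃ u, b = a * u) := by
  have half : ∀ a b : S, ((a : WithOne S) ∈ {x : WithOne S | ∃ u : WithOne S, x = (b : WithOne S) * u})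
      ↔ (a = b ∨ ∃ u, a = b * u) := by
    intro a b
    constructor
    · rintro ⟨u, hu⟩
      induction u using WithOne.recOneCoe with
      | one => left; rw [mul_one] at hu; exact WithOne.coe_inj.1 hu
      | coe u => right; exact ⟨u, WithOne.coe_inj.1 (by rw [hu, WithOne.coe_mul])⟩
    · rintro (rfl | ⟨u, rfl⟩)
      · exact ⟨1, (mul_one _).symm⟩
      · exact ⟨u, WithOne.coe_mul _ _⟩
  rw [← half, ← half]
  constructor
  · intro h
    constructor
    · rw [← show _ = _ from h]; exact ⟨1, (mul_one _).symm⟩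
    · rw [show _ = _ from h]; exact ⟨1, (mul_one _).symm⟩
  · rintro ⟨⟨p, hp⟩, ⟨q, hq⟩⟩
    ext x
    constructor
    · rintro ⟨u, rfl⟩
      exact ⟨p * u, by rw [← mul_assoc, ← hp]⟩
    · rintro ⟨u, rfl⟩
      exact ⟨q * u, by rw [← mul_assoc, ← hq]⟩

theorem mul_sig {S : Type*} [Semigroup S] (a b c d : S) (γ : R2) :
    ((a, b, R2.σ) : S × S × R2) * (c, d, γ) = (a * d, b * d, γ) := rfl

theorem mul_tau {S : Type*} [Semigroup S] (a b c d : S) (γ : R2) :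
    ((a, b, R2.τ) : S × S × R2) * (c, d, γ) = (a * c, b * c, γ) := rfl

/-- Elements of `T(S)` satisfy `s ∈ S t`. -/
theorem of_mem_TS {S : Type*} [Semigroup S] (hS : IdemCovered S) (x : S × S × R2)
    (hx : x ∈ TS S) : ∃ a : S, x.1 = a * x.2.1 := by
  induction hx using Subsemigroup.closure_induction with
  | mem x hx =>
    obtain ⟨-, a, ha⟩ := hx
    induction a using WithOne.recOneCoe with
    | one =>
      rw [one_mul] at ha
      obtain ⟨e, f, -, -, -, hf⟩ := hS x.2.1
      exact ⟨f, by rw [hf]; exact WithOne.coe_inj.1 ha⟩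
    | coe a => exact ⟨a, WithOne.coe_inj.1 (by rw [ha, WithOne.coe_mul])⟩
  | mul x y _ _ hx hy =>
    obtain ⟨s, t, α⟩ := x
    obtain ⟨u, v, β⟩ := y
    obtain ⟨a, ha⟩ := hx
    simp only at ha
    subst ha
    cases α
    · exact ⟨a, by simp [mul_sig, mul_assoc]⟩
    · exact ⟨a, by simp [mul_tau, mul_assoc]⟩

/-- Idempotents `(p e, e, σ)` and `(e, e, τ)` generate every `(p e, e, α)`. -/
theorem mem_TS_idem {S : Type*} [Semigroup S] (s e : S) (he : e * e = e) (hs : s * e = s)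
    (α : R2) : ((s, e, α) : S × S × R2) ∈ TS S := by
  have h1 : ((s, e, R2.σ) : S × S × R2) ∈ TS S := by
    refine Subsemigroup.subset_closure ⟨?_, s, ?_⟩
    · change _ * _ = _
      rw [mul_sig, he, hs]
    · rw [← WithOne.coe_mul, hs]
  have h2 : ((e, e, R2.τ) : S × S × R2) ∈ TS S := by
    refine Subsemigroup.subset_closure ⟨?_, 1, ?_⟩
    · change _ * _ = _
      rw [mul_tau, he]
    · rw [one_mul]
  cases α
  · exact h1
  · have := mul_mem h1 h2
    rwa [mul_sig, he, hs] at this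

theorem mem_TS {S : Type*} [Semigroup S] (hS : IdemCovered S) (p t : S) (α : R2) :
    ((p * t, t, α) : S × S × R2) ∈ TS S := by
  obtain ⟨e, f, he, hf, hte, hft⟩ := hS t
  have h1 := mem_TS_idem (p * f) f hf (by rw [mul_assoc, hf]) R2.τ
  have h2 := mem_TS_idem t e he hte α
  have := mul_mem h1 h2
  rwa [mul_tau, mul_assoc, hft] at this

theorem mem_TS_diag {S : Type*} [Semigroup S] (hS : IdemCovered S) (t : S) (α : R2) :
    ((t, t, α) : S × S × R2) ∈ TS S := by
  obtain ⟨e, f, -, -, -, hf⟩ := hS t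
  have := mem_TS hS f t α
  rwa [hf] at this

theorem half_R {S : Type*} [Semigroup S] (x y : TS S) (h : x = y ∨ ∃ u, x = y * u) :
    x.1.2.1 = y.1.2.1 ∨ ∃ w, x.1.2.1 = y.1.2.1 * w := by
  rcases h with rfl | ⟨u, rfl⟩
  · exact Or.inl rfl
  · right
    obtain ⟨⟨s, t, α⟩, hy⟩ := y
    obtain ⟨⟨c, d, β⟩, hu⟩ := u
    cases α
    · exact ⟨d, rfl⟩
    · exact ⟨c, rfl⟩

theorem half_L {S : Type*} [Semigroup S] (hS : IdemCovered S) (x y : TS S)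
    (h : x = y ∨ ∃ u, x = u * y) :
    x.1.2.1 = y.1.2.1 ∨ ∃ w, x.1.2.1 = w * y.1.2.1 := by
  rcases h with rfl | ⟨u, rfl⟩
  · exact Or.inl rfl
  · right
    obtain ⟨⟨s, t, α⟩, hy⟩ := y
    obtain ⟨⟨c, d, β⟩, hu⟩ := u
    obtain ⟨a, ha⟩ := of_mem_TS hS _ hy
    simp only at ha
    subst ha
    cases β
    · exact ⟨d, rfl⟩
    · exact ⟨d * a, (mul_assoc _ _ _).symm⟩

theorem half_R' {S : Type*} [Semigroup S] (hS : IdemCovered S) (a c d : S) (α β : R2)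
    (h : c = d ∨ ∃ w, c = d * w) (h1 : ((a * c, c, α) : S × S × R2) ∈ TS S)
    (h2 : ((a * d, d, β) : S × S × R2) ∈ TS S) :
    ∃ u : TS S, (⟨_, h1⟩ : TS S) = ⟨_, h2⟩ * u := by
  obtain ⟨w, rfl⟩ : ∃ w, c = d * w := by
    rcases h with rfl | h
    · obtain ⟨e, -, -, -, he, -⟩ := hS c
      exact ⟨e, he.symm⟩
    · exact h
  refine ⟨⟨(w, w, α), mem_TS_diag hS w α⟩, Subtype.ext ?_⟩
  change _ = _ * _
  cases β
  · simp [mul_sig, mul_assoc]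
  · simp [mul_tau, mul_assoc]

theorem half_L' {S : Type*} [Semigroup S] (hS : IdemCovered S) (a b c d : S) (β : R2)
    (h : c = d ∨ ∃ w, c = w * d) (h1 : ((a * c, c, β) : S × S × R2) ∈ TS S)
    (h2 : ((b * d, d, β) : S × S × R2) ∈ TS S) :
    ∃ u : TS S, (⟨_, h1⟩ : TS S) = u * ⟨_, h2⟩ := by
  obtain ⟨w, rfl⟩ : ∃ w, c = w * d := by
    rcases h with rfl | h
    · obtain ⟨-, e, -, -, -, he⟩ := hS c
      exact ⟨e, he.symm⟩
    · exact h
  refine ⟨⟨(a * w, w, R2.σ), mem_TS hS a w R2.σ⟩, Subtype.ext ?_⟩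
  change _ = _ * _
  simp [mul_sig, mul_assoc]

/-- description of Green's relation 𝓓 on `T(S)`. -/
theorem statement_10 {S : Type*} [Semigroup S] (hS : IdemCovered S)
    (s t u v : S) (α β : R2)
    (hx : ((s, t, α) : S × S × R2) ∈ TS S) (hy : ((u, v, β) : S × S × R2) ∈ TS S) :
    greenD (⟨(s, t, α), hx⟩ : ↥(TS S)) ⟨(u, v, β), hy⟩ ↔ greenD t v := by
  constructor
  · rintro ⟨z, hR, hL⟩
    rw [greenR_iff'] at hR
    rw [greenL_iff'] at hL
    refine ⟨z.1.2.1, ?_, ?_⟩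
    · rw [greenR_iff']
      exact ⟨half_R _ _ hR.1, half_R _ _ hR.2⟩
    · rw [greenL_iff']
      exact ⟨half_L hS _ _ hL.1, half_L hS _ _ hL.2⟩
  · rintro ⟨c, hR, hL⟩
    rw [greenR_iff'] at hR
    rw [greenL_iff'] at hL
    obtain ⟨a, ha⟩ := of_mem_TS hS _ hx
    obtain ⟨b, hb⟩ := of_mem_TS hS _ hy
    simp only at ha hb
    subst ha hb
    refine ⟨⟨(a * c, c, β), mem_TS hS a c β⟩, ?_, ?_⟩
    · rw [greenR_iff']
      exact ⟨Or.inr (half_R' hS _ _ _ _ _ hR.1 _ _), Or.inr (half_R' hS _ _ _ _ _ hR.2 _ _)⟩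
    · rw [greenL_iff']
      exact ⟨Or.inr (half_L' hS _ _ _ _ _ hL.1 _ _), Or.inr (half_L' hS _ _ _ _ _ hL.2 _ _)⟩

end SemibandEmbed
end

section
/- Let S be an idempotent covered semigroup. If e = (s,t,σ) is an idempotent of T(S), then the map e·T(S)·e → tSt sending (s₁,t₁,σ) to t₁ is a semigroup isomorphism from the local submonoid e·T(S)·e of T(S) onto the local submonoid tSt of S. If e = (s,t,τ) is an idempotent of T(S), then the map e·T(S)·e → sSs sending (s₁,t₁,τ) to s₁ is a semigroup isomorphism from e·T(S)·e onto sSs. -/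
namespace SemibandEmbed

theorem sd_σ {S : Type*} [Semigroup S] (a b c d : S) (α : R2) :
    ((a, b, R2.σ) : S × S × R2) * (c, d, α) = (a * d, b * d, α) := rfl

theorem sd_τ {S : Type*} [Semigroup S] (a b c d : S) (α : R2) :
    ((a, b, R2.τ) : S × S × R2) * (c, d, α) = (a * c, b * c, α) := rfl

theorem diag_mem {S : Type*} [Semigroup S] (hS : IdemCovered S) (u : S) (α : R2) :
    ((u, u, α) : S × S × R2) ∈ TS S := by
  obtain ⟨g, f, hg, hf, hug, hfu⟩ := hS u
  have hg' : g * g = g := hg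
  have hf' : f * f = f := hf
  have h1 : ((f, f, R2.τ) : S × S × R2) ∈ TS S := by
    apply Subsemigroup.subset_closure
    refine ⟨?_, 1, by simp⟩
    change _ * _ = _
    rw [sd_τ, hf']
  have h2 : ((u, g, R2.σ) : S × S × R2) ∈ TS S := by
    apply Subsemigroup.subset_closure
    refine ⟨?_, (u : WithOne S), ?_⟩
    · change _ * _ = _
      rw [sd_σ, hg', hug]
    · change (u : WithOne S) = (u : WithOne S) * (g : WithOne S)
      rw [← WithOne.coe_mul, hug]
  have h3 : ((g, g, α) : S × S × R2) ∈ TS S := by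
    apply Subsemigroup.subset_closure
    refine ⟨?_, 1, by simp⟩
    change _ * _ = _
    cases α
    · rw [sd_σ, hg']
    · rw [sd_τ, hg']
  have h := (TS S).mul_mem ((TS S).mul_mem h1 h2) h3
  rwa [sd_τ, sd_σ, hfu, hug] at h

/-- the local submonoids of `T(S)` are isomorphic to local submonoids of `S`:
if `e = (s,t,σ)` is an idempotent of `T(S)`, the second projection is a multiplication
preserving bijection from `e·T(S)·e` onto `tSt`; if `e = (s,t,τ)`, the first projection
is such a bijection from `e·T(S)·e` onto `sSs`. -/
theorem statement_14 {S : Type*} [Semigroup S] (hS : IdemCovered S)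
    (s t : S) (e : ↥(TS S)) (he : IsIdempotentElem e) :
    ((e : S × S × R2) = (s, t, R2.σ) →
      Set.MapsTo (fun x : ↥(TS S) => (x : S × S × R2).2.1)
        {z : ↥(TS S) | ∃ x : ↥(TS S), z = e * x * e} {w : S | ∃ u : S, w = t * u * t} ∧
      (∀ z w : ↥(TS S), (∃ x, z = e * x * e) → (∃ x, w = e * x * e) →
        ((z * w : ↥(TS S)) : S × S × R2).2.1 = (z : S × S × R2).2.1 * (w : S × S × R2).2.1) ∧
      Set.InjOn (fun x : ↥(TS S) => (x : S × S × R2).2.1)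
        {z : ↥(TS S) | ∃ x : ↥(TS S), z = e * x * e} ∧
      Set.SurjOn (fun x : ↥(TS S) => (x : S × S × R2).2.1)
        {z : ↥(TS S) | ∃ x : ↥(TS S), z = e * x * e} {w : S | ∃ u : S, w = t * u * t}) ∧
    ((e : S × S × R2) = (s, t, R2.τ) →
      Set.MapsTo (fun x : ↥(TS S) => (x : S × S × R2).1)
        {z : ↥(TS S) | ∃ x : ↥(TS S), z = e * x * e} {w : S | ∃ u : S, w = s * u * s} ∧
      (∀ z w : ↥(TS S), (∃ x, z = e * x * e) → (∃ x, w = e * x * e) →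
        ((z * w : ↥(TS S)) : S × S × R2).1 = (z : S × S × R2).1 * (w : S × S × R2).1) ∧
      Set.InjOn (fun x : ↥(TS S) => (x : S × S × R2).1)
        {z : ↥(TS S) | ∃ x : ↥(TS S), z = e * x * e} ∧
      Set.SurjOn (fun x : ↥(TS S) => (x : S × S × R2).1)
        {z : ↥(TS S) | ∃ x : ↥(TS S), z = e * x * e} {w : S | ∃ u : S, w = s * u * s}) := by
  have he' : (e : S × S × R2) * (e : S × S × R2) = (e : S × S × R2) :=
    congrArg Subtype.val he
  constructor
  · intro h
    rw [h, sd_σ] at he'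
    simp only [Prod.mk.injEq, and_true] at he'
    obtain ⟨hst, htt⟩ := he'
    have key : ∀ z : ↥(TS S), (∃ x, z = e * x * e) →
        ∃ c, (z : S × S × R2) = (s * (c * t), t * c * t, R2.σ) := by
      rintro _ ⟨⟨⟨a, b, α⟩, hx⟩, rfl⟩
      simp only [MulMemClass.coe_mul, h]
      cases α
      · exact ⟨b, by simp only [sd_σ, mul_assoc]⟩
      · exact ⟨b * s, by simp only [sd_σ, sd_τ, mul_assoc, hst]⟩
    refine ⟨?_, ?_, ?_, ?_⟩
    · intro z hz
      obtain ⟨c, hc⟩ := key z hz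
      exact ⟨c, by simp only [hc]⟩
    · intro z w hz hw
      obtain ⟨c, hc⟩ := key z hz
      obtain ⟨d, hd⟩ := key w hw
      simp only [MulMemClass.coe_mul, hc, hd, sd_σ]
    · intro z hz w hw hzw
      obtain ⟨c, hc⟩ := key z hz
      obtain ⟨d, hd⟩ := key w hw
      simp only [hc, hd] at hzw
      apply Subtype.ext
      rw [hc, hd, hzw, ← hst, mul_assoc s, mul_assoc s, ← mul_assoc t, ← mul_assoc t, hzw]
    · rintro _ ⟨u, rfl⟩
      refine ⟨e * ⟨_, diag_mem hS u R2.σ⟩ * e, ⟨_, rfl⟩, ?_⟩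
      simp only [MulMemClass.coe_mul, h, sd_σ]
  · intro h
    rw [h, sd_τ] at he'
    simp only [Prod.mk.injEq, and_true] at he'
    obtain ⟨hss, hts⟩ := he'
    have key : ∀ z : ↥(TS S), (∃ x, z = e * x * e) →
        ∃ c, (z : S × S × R2) = (s * c * s, t * (c * s), R2.τ) := by
      rintro _ ⟨⟨⟨a, b, α⟩, hx⟩, rfl⟩
      simp only [MulMemClass.coe_mul, h]
      cases α
      · exact ⟨a * t, by simp only [sd_σ, sd_τ, mul_assoc, hts]⟩
      · exact ⟨a, by simp only [sd_τ, mul_assoc]⟩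
    refine ⟨?_, ?_, ?_, ?_⟩
    · intro z hz
      obtain ⟨c, hc⟩ := key z hz
      exact ⟨c, by simp only [hc]⟩
    · intro z w hz hw
      obtain ⟨c, hc⟩ := key z hz
      obtain ⟨d, hd⟩ := key w hw
      simp only [MulMemClass.coe_mul, hc, hd, sd_τ]
    · intro z hz w hw hzw
      obtain ⟨c, hc⟩ := key z hz
      obtain ⟨d, hd⟩ := key w hw
      simp only [hc, hd] at hzw
      apply Subtype.ext
      rw [hc, hd, hzw, ← hts, mul_assoc t, mul_assoc t, ← mul_assoc s, ← mul_assoc s, hzw]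
    · rintro _ ⟨u, rfl⟩
      refine ⟨e * ⟨_, diag_mem hS u R2.τ⟩ * e, ⟨_, rfl⟩, ?_⟩
      simp only [MulMemClass.coe_mul, h, sd_τ]

end SemibandEmbed
end
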